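/- For every subadditive potential Φ over (X,T): the map μ ↦ χ(μ,Φ) is upper semicontinuous on M(X,T) with respect to the weak* topology, the set O of observable measures is a nonempty weak*-compact subset of M(X,T), and consequently there exists μ ∈ O with χ(μ,Φ) = sup{χ(ν,Φ) : ν ∈ O}; that is, a Lyapunov maximizing observable measure for Φ always exists. -/

import Mathlib

open MeasureTheory Filter Topology
open scoped ENNReal

/-- The empirical probability measure `γ_{n+1,x} = (1/(n+1)) ∑_{j≤n} δ_{T^j x}` of the orbit
of `x` (indexed so that it is a probability measure for every index). -/
noncomputable def empiricalPM {X : Type*} [MeasurableSpace X] (T : X → X) (x : X) (n : ℕ) :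
    MeasureTheory.ProbabilityMeasure X :=
  ⟨(n + 1 : ℝ≥0∞)⁻¹ • ∑ j ∈ Finset.range (n + 1), MeasureTheory.Measure.dirac (T^[j] x), by
    constructor
    rw [Measure.smul_apply, Measure.finset_sum_apply]
    simp
    rw [ENNReal.inv_mul_cancel] <;> simp⟩

/-- The set `V(x)` of weak* limit points of the sequence of empirical measures of `x`. -/
def limitSet {X : Type*} [MeasurableSpace X] [TopologicalSpace X] [OpensMeasurableSpace X]
    (T : X → X) (x : X) : Set (MeasureTheory.ProbabilityMeasure X) :=
  {μ | ∃ φ : ℕ → ℕ, StrictMono φ ∧ Tendsto (fun j => empiricalPM T x (φ j)) atTop (𝓝 μ)}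

/-- `μ` is an observable (physical-like) measure for `(X, T, Leb)`: every weak* neighbourhood
`U` of `μ` (equivalently, every ε-ball around `μ` in a compatible metric) is intersected by
`V(x)` for a positive `Leb`-measure set of points `x`. -/
def IsObservable {X : Type*} [MeasurableSpace X] [TopologicalSpace X] [OpensMeasurableSpace X]
    (Leb : MeasureTheory.Measure X) (T : X → X) (μ : MeasureTheory.ProbabilityMeasure X) : Prop :=
  ∀ U : Set (MeasureTheory.ProbabilityMeasure X), IsOpen U → μ ∈ U →
    0 < Leb {x | (limitSet T x ∩ U).Nonempty}

/-- The Lyapunov exponent `χ(μ, Φ) = lim_n (1/n) ∫ log φ_n dμ` of a potential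
`Φ = {log φ_n}` (for invariant `μ` the limit exists by subadditivity, so it equals the
`liminf` used here); it takes values in `[-∞, ∞)`, i.e. in `EReal`. -/
noncomputable def lyapExp {X : Type*} [MeasurableSpace X] (φ : ℕ → X → ℝ)
    (μ : MeasureTheory.Measure X) : EReal :=
  liminf (fun n : ℕ => (((n : ℝ)⁻¹ * ∫ x, Real.log (φ n x) ∂μ : ℝ) : EReal)) atTop

/-!
Empirical averages of a bounded function over the orbits of `x` and of `T x` differ by a telescoping
term that vanishes in the limit, so every measure in `V(x)` is invariant. Compactness of `M(X)`
makes each `V(x)` nonempty; were every measure unobservable, finitely many of the neighbourhoods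
witnessing this would cover `M(X)`, and `Leb` would vanish. For an invariant measure, Fekete's lemma
turns the Lyapunov exponent into `inf_n (1/n) ∫ log φ_n dμ`, an infimum of weak* continuous
functions of `μ`, hence upper semicontinuous, and it attains its maximum on the compact set `O`.
-/

section EmpiricalMeasures

variable {X : Type*} [MeasurableSpace X] {T : X → X}

theorem integral_empiricalPM {E : Type*} [NormedAddCommGroup E] [NormedSpace ℝ E]
    [CompleteSpace E] (T : X → X) (x : X) (n : ℕ) {f : X → E} (hf : StronglyMeasurable f) :
    ∫ y, f y ∂(empiricalPM T x n : Measure X) = birkhoffAverage ℝ T f (n + 1) x := by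
  have hcoe : (empiricalPM T x n : Measure X) =
      (n + 1 : ℝ≥0∞)⁻¹ • ∑ j ∈ Finset.range (n + 1), Measure.dirac (T^[j] x) := rfl
  have hint : ∀ j ∈ Finset.range (n + 1), Integrable f (Measure.dirac (T^[j] x)) :=
    fun j _ => integrable_dirac' hf (by simp)
  have hreal : ((n : ℝ≥0∞) + 1)⁻¹.toReal = ((n + 1 : ℕ) : ℝ)⁻¹ := by
    rw [ENNReal.toReal_inv, ← Nat.cast_add_one, ENNReal.toReal_natCast]
  rw [hcoe, integral_smul_measure, integral_finsetSum_measure hint, hreal]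
  simp only [integral_dirac' _ _ hf, birkhoffAverage, birkhoffSum]

theorem map_empiricalPM (hT : Measurable T) (x : X) (n : ℕ) :
    (empiricalPM T x n : Measure X).map T = empiricalPM T (T x) n := by
  change Measure.map T ((n + 1 : ℝ≥0∞)⁻¹ • ∑ j ∈ Finset.range (n + 1), Measure.dirac (T^[j] x)) =
    (n + 1 : ℝ≥0∞)⁻¹ • ∑ j ∈ Finset.range (n + 1), Measure.dirac (T^[j] (T x))
  rw [Measure.map_smul, Measure.map_finset_sum hT.aemeasurable]
  simp only [Measure.map_dirac' hT, ← Function.iterate_succ_apply, Function.iterate_succ_apply']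

theorem tendsto_integral_empiricalPM_apply_sub [TopologicalSpace X] [OpensMeasurableSpace X]
    (T : X → X) (x : X) (f : BoundedContinuousFunction X ℝ) :
    Tendsto (fun n => ∫ y, f y ∂(empiricalPM T (T x) n : Measure X) -
      ∫ y, f y ∂(empiricalPM T x n : Measure X)) atTop (𝓝 0) := by
  simp only [integral_empiricalPM _ _ _ f.continuous.stronglyMeasurable]
  exact (tendsto_birkhoffAverage_apply_sub_birkhoffAverage' ℝ f.isBounded_range T x).comp
    (tendsto_add_atTop_nat 1)

end EmpiricalMeasures

section InvariantMeasures

variable {X : Type*} [MeasurableSpace X] {T : X → X}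

/-- The set `M(X,T)` of `T`-invariant probability measures. Invariance is expressed through
`Measure.map`, so it has its usual meaning only for measurable `T`. -/
def invariantMeasures (T : X → X) : Set (ProbabilityMeasure X) :=
  {μ | (μ : Measure X).map T = (μ : Measure X)}

variable [TopologicalSpace X] [HasOuterApproxClosed X] [BorelSpace X]

theorem isClosed_invariantMeasures (hT : Continuous T) : IsClosed (invariantMeasures T) := by
  have heq : invariantMeasures T = {μ | μ.map hT.measurable.aemeasurable = μ} := by
    ext μ
    exact (ProbabilityMeasure.toMeasure_injective.eq_iff
      (a := μ.map hT.measurable.aemeasurable) (b := μ))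
  rw [heq]
  exact isClosed_eq (ProbabilityMeasure.continuous_map hT) continuous_id

theorem limitSet_subset_invariantMeasures (hT : Continuous T) (x : X) :
    limitSet T x ⊆ invariantMeasures T := by
  rintro μ ⟨k, hk, hlim⟩
  have := Measure.isProbabilityMeasure_map (μ := (μ : Measure X)) hT.measurable.aemeasurable
  refine ext_of_forall_integral_eq_of_IsFiniteMeasure fun f => ?_
  have hmap := ProbabilityMeasure.tendsto_iff_forall_integral_tendsto.1
    (ProbabilityMeasure.tendsto_map_of_tendsto_of_continuous _ _ hlim hT) f
  simp only [ProbabilityMeasure.toMeasure_map, map_empiricalPM hT.measurable] at hmap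
  have hsub := hmap.sub (ProbabilityMeasure.tendsto_iff_forall_integral_tendsto.1 hlim f)
  have hzero := (tendsto_integral_empiricalPM_apply_sub T x f).comp hk.tendsto_atTop
  exact sub_eq_zero.1 (tendsto_nhds_unique hsub hzero)

end InvariantMeasures

section ObservableMeasures

variable {X : Type*} [MeasurableSpace X] [TopologicalSpace X] [OpensMeasurableSpace X]
  {Leb : Measure X} {T : X → X}

/-- The set `O` of observable measures of `(X, T, Leb)`. -/
def observableMeasures (Leb : Measure X) (T : X → X) : Set (ProbabilityMeasure X) :=
  {μ | IsObservable Leb T μ}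

theorem isClosed_observableMeasures (Leb : Measure X) (T : X → X) :
    IsClosed (observableMeasures Leb T) := by
  refine isClosed_iff_nhds.2 fun μ hμ U hU hμU => ?_
  obtain ⟨ν, hνU, hν⟩ := hμ U (hU.mem_nhds hμU)
  exact hν U hU hνU

theorem observableMeasures_subset {F : Set (ProbabilityMeasure X)} (hF : IsClosed F)
    (hlim : ∀ᵐ x ∂Leb, limitSet T x ⊆ F) : observableMeasures Leb T ⊆ F := by
  intro μ hμ
  by_contra hμF
  have hmeets : ∃ᵐ x ∂Leb, (limitSet T x ∩ Fᶜ).Nonempty :=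
    frequently_ae_iff.2 (hμ Fᶜ hF.isOpen_compl hμF).ne'
  obtain ⟨x, ⟨ν, hν, hνF⟩, hsub⟩ := (hmeets.and_eventually hlim).exists
  exact hνF (hsub hν)

theorem exists_mem_observableMeasures_of_isCompact {K : Set (ProbabilityMeasure X)}
    (hK : IsCompact K) (hpos : 0 < Leb {x | (limitSet T x ∩ K).Nonempty}) :
    ∃ μ ∈ K, μ ∈ observableMeasures Leb T := by
  by_contra! hnone
  refine hpos.ne' (hK.induction_on (p := fun s => Leb {x | (limitSet T x ∩ s).Nonempty} = 0)
    (by simp) (fun s t hst ht => ?_) (fun s t hs ht => ?_) fun μ hμ => ?_)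
  · exact measure_mono_null (fun x hx => hx.mono (Set.inter_subset_inter_right _ hst)) ht
  · simp only [Set.inter_union_distrib_left, Set.union_nonempty]
    exact measure_union_null hs ht
  · have hnot : ¬ IsObservable Leb T μ := hnone μ hμ
    simp only [IsObservable, not_forall, not_lt, nonpos_iff_eq_zero] at hnot
    obtain ⟨U, hU, hμU, hnull⟩ := hnot
    exact ⟨U, mem_nhdsWithin_of_mem_nhds (hU.mem_nhds hμU), hnull⟩

theorem limitSet_nonempty [SeqCompactSpace (ProbabilityMeasure X)] (T : X → X) (x : X) :
    (limitSet T x).Nonempty := by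
  obtain ⟨μ, k, hk, hlim⟩ := SeqCompactSpace.tendsto_subseq (empiricalPM T x)
  exact ⟨μ, k, hk, hlim⟩

theorem observableMeasures_nonempty [CompactSpace (ProbabilityMeasure X)]
    [SeqCompactSpace (ProbabilityMeasure X)] (Leb : Measure X) [NeZero Leb] (T : X → X) :
    (observableMeasures Leb T).Nonempty := by
  have hpos : 0 < Leb {x | (limitSet T x ∩ Set.univ).Nonempty} := by
    simp [limitSet_nonempty, NeZero.pos]
  obtain ⟨μ, -, hμ⟩ := exists_mem_observableMeasures_of_isCompact isCompact_univ hpos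
  exact ⟨μ, hμ⟩

end ObservableMeasures

section LyapunovExponents

/-- Fekete's lemma; with values in `EReal` it needs no lower bound on `a n / n`. -/
theorem tendsto_inv_mul_iInf_of_subadditive {a : ℕ → ℝ}
    (ha : ∀ m n, 1 ≤ m → 1 ≤ n → a (m + n) ≤ a m + a n) :
    Tendsto (fun n : ℕ => (((n : ℝ)⁻¹ * a n : ℝ) : EReal)) atTop
      (𝓝 (⨅ (n : ℕ) (_ : 1 ≤ n), (((n : ℝ)⁻¹ * a n : ℝ) : EReal))) := by
  refine tendsto_order.2 ⟨fun l hl => ?_, fun L hL => ?_⟩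
  · filter_upwards [eventually_ge_atTop 1] with n hn
    exact hl.trans_le (iInf₂_le n hn)
  · obtain ⟨r, hInf, hrL⟩ := EReal.lt_iff_exists_real_btwn.1 hL
    obtain ⟨n, hn, hnr⟩ : ∃ n : ℕ, ∃ _ : 1 ≤ n, (((n : ℝ)⁻¹ * a n : ℝ) : EReal) < r := by
      simpa only [iInf_lt_iff] using hInf
    have hsub : Subadditive (Function.update a 0 0) := by
      intro p q
      rcases p.eq_zero_or_pos with rfl | hp
      · simp
      rcases q.eq_zero_or_pos with rfl | hq
      · simp
      simpa [hp.ne', hq.ne'] using ha p q hp hq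
    have hdiv : Function.update a 0 0 n / n < r := by
      rw [Function.update_of_ne (by lia), div_eq_inv_mul]
      exact EReal.coe_lt_coe_iff.1 hnr
    filter_upwards [hsub.eventually_div_lt_of_div_lt (by lia) hdiv, eventually_ge_atTop 1]
      with p hp hp1
    rw [Function.update_of_ne (by lia), div_eq_inv_mul] at hp
    exact (EReal.coe_lt_coe_iff.2 hp).trans hrL

theorem integral_le_add_of_le_add_comp {X Y : Type*} [MeasurableSpace X] [MeasurableSpace Y]
    {μ : Measure X} {ν : Measure Y} {S : X → Y} (hS : MeasurePreserving S μ ν)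
    {f g : X → ℝ} {h : Y → ℝ} (hf : Integrable f μ) (hg : Integrable g μ) (hh : Integrable h ν)
    (hle : ∀ᵐ x ∂μ, f x ≤ g x + h (S x)) : ∫ x, f x ∂μ ≤ ∫ x, g x ∂μ + ∫ y, h y ∂ν := by
  have hhS : Integrable (fun x => h (S x)) μ := hS.integrable_comp_of_integrable hh
  calc ∫ x, f x ∂μ ≤ ∫ x, (g x + h (S x)) ∂μ := integral_mono_ae hf (hg.add hhS) hle
    _ = ∫ x, g x ∂μ + ∫ x, h (S x) ∂μ := integral_add hg hhS
    _ = ∫ x, g x ∂μ + ∫ y, h y ∂ν := by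
      rw [← hS.map_eq, integral_map hS.aemeasurable (hS.map_eq ▸ hh.aestronglyMeasurable)]

variable {X : Type*} [TopologicalSpace X] {T : X → X}

/-- `Φ = {log φ_n}_{n ≥ 1}` is a subadditive potential over `(X, T)`; nothing is required of the
meaningless term `φ 0`. -/
structure IsSubadditivePotential (T : X → X) (φ : ℕ → X → ℝ) : Prop where
  continuous : ∀ n, 1 ≤ n → Continuous (φ n)
  pos : ∀ n, 1 ≤ n → ∀ x, 0 < φ n x
  le_mul : ∀ m n, 1 ≤ m → 1 ≤ n → ∀ x, φ (m + n) x ≤ φ m x * φ n (T^[m] x)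

namespace IsSubadditivePotential

variable {φ : ℕ → X → ℝ}

theorem continuous_log (hφ : IsSubadditivePotential T φ) {n : ℕ} (hn : 1 ≤ n) :
    Continuous fun x => Real.log (φ n x) :=
  (hφ.continuous n hn).log fun x => (hφ.pos n hn x).ne'

theorem log_le_add (hφ : IsSubadditivePotential T φ) {m n : ℕ} (hm : 1 ≤ m) (hn : 1 ≤ n) (x : X) :
    Real.log (φ (m + n) x) ≤ Real.log (φ m x) + Real.log (φ n (T^[m] x)) := by
  rw [← Real.log_mul (hφ.pos m hm x).ne' (hφ.pos n hn _).ne']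
  exact Real.log_le_log (hφ.pos _ (by lia) x) (hφ.le_mul m n hm hn x)

variable [CompactSpace X] [MeasurableSpace X] [OpensMeasurableSpace X]

theorem integrable_log (hφ : IsSubadditivePotential T φ) {n : ℕ} (hn : 1 ≤ n) (μ : Measure X)
    [IsFiniteMeasure μ] : Integrable (fun x => Real.log (φ n x)) μ :=
  (BoundedContinuousFunction.mkOfCompact ⟨_, hφ.continuous_log hn⟩).integrable μ

theorem lyapExp_eq_iInf (hφ : IsSubadditivePotential T φ) {μ : Measure X} [IsFiniteMeasure μ]
    (hμ : MeasurePreserving T μ μ) :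
    lyapExp φ μ =
      ⨅ (n : ℕ) (_ : 1 ≤ n), (((n : ℝ)⁻¹ * ∫ x, Real.log (φ n x) ∂μ : ℝ) : EReal) := by
  refine (tendsto_inv_mul_iInf_of_subadditive fun m n hm hn => ?_).liminf_eq
  exact integral_le_add_of_le_add_comp (hμ.iterate m) (hφ.integrable_log (by lia) μ)
    (hφ.integrable_log hm μ) (hφ.integrable_log hn μ) (ae_of_all μ (hφ.log_le_add hm hn))

theorem upperSemicontinuousOn_lyapExp (hφ : IsSubadditivePotential T φ) (hT : Measurable T) :
    UpperSemicontinuousOn (fun μ : ProbabilityMeasure X => lyapExp φ (μ : Measure X))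
      (invariantMeasures T) := by
  have hcont : ∀ n : ℕ, 1 ≤ n → Continuous fun μ : ProbabilityMeasure X =>
      (((n : ℝ)⁻¹ * ∫ x, Real.log (φ n x) ∂(μ : Measure X) : ℝ) : EReal) := fun n hn =>
    continuous_coe_real_ereal.comp <| continuous_const.mul <|
      ProbabilityMeasure.continuous_integral_continuousMap (⟨_, hφ.continuous_log hn⟩ : C(X, ℝ))
  have husc := upperSemicontinuousOn_biInf fun n hn =>
    (hcont n hn).continuousOn.upperSemicontinuousOn (s := invariantMeasures T)
  exact fun μ hμ => UpperSemicontinuousWithinAt.congr_of_eventuallyEq (husc μ hμ) hμ <|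
    eventually_nhdsWithin_of_forall fun ν hν => (hφ.lyapExp_eq_iInf ⟨hT, hν⟩).symm

end IsSubadditivePotential

end LyapunovExponents

theorem exists_lyapunov_maximizing_observable_general
    {X : Type*} [TopologicalSpace X] [T2Space X] [SecondCountableTopology X] [CompactSpace X]
    [MeasurableSpace X] [BorelSpace X] {T : X → X} (hT : Continuous T)
    (Leb : Measure X) [NeZero Leb] {φ : ℕ → X → ℝ} (hφ : IsSubadditivePotential T φ) :
    UpperSemicontinuousOn (fun μ : ProbabilityMeasure X => lyapExp φ (μ : Measure X))
        (invariantMeasures T) ∧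
      (observableMeasures Leb T).Nonempty ∧
      IsCompact (observableMeasures Leb T) ∧
      observableMeasures Leb T ⊆ invariantMeasures T ∧
      ∃ μ ∈ observableMeasures Leb T,
        lyapExp φ (μ : Measure X) =
          sSup {c : EReal | ∃ ν ∈ observableMeasures Leb T, c = lyapExp φ (ν : Measure X)} := by
  have husc := hφ.upperSemicontinuousOn_lyapExp hT.measurable
  have hne := observableMeasures_nonempty Leb T
  have hcompact := (isClosed_observableMeasures Leb T).isCompact
  have hinv : observableMeasures Leb T ⊆ invariantMeasures T :=
    observableMeasures_subset (isClosed_invariantMeasures hT)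
      (ae_of_all Leb (limitSet_subset_invariantMeasures hT))
  obtain ⟨μ, hμ, hmax⟩ := (husc.mono hinv).exists_isMaxOn hne hcompact
  refine ⟨husc, hne, hcompact, hinv, μ, hμ, le_antisymm (le_sSup ⟨μ, hμ, rfl⟩) (sSup_le ?_)⟩
  rintro _ ⟨ν, hν, rfl⟩
  exact hmax hν

/-- **Remark 1.4 / existence of Lyapunov maximizing observable measures.** For every
subadditive potential `Φ = {log φ_n}` over `(X, T)`: the map `μ ↦ χ(μ, Φ)` is upper
semicontinuous on `M(X,T)` for the weak* topology, the set `O` of observable measures is a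
nonempty weak*-compact subset of `M(X,T)`, and consequently some observable measure attains
`sup {χ(ν,Φ) : ν ∈ O}`, i.e. a Lyapunov maximizing observable measure exists. -/
theorem exists_lyapunov_maximizing_observable
    {X : Type*} [MetricSpace X] [CompactSpace X] [MeasurableSpace X] [BorelSpace X]
    (T : X → X) (hT : IsHomeomorph T)
    (Leb : MeasureTheory.Measure X) [IsProbabilityMeasure Leb]
    (φ : ℕ → X → ℝ)
    (hcont : ∀ n, 1 ≤ n → Continuous (φ n))
    (hpos : ∀ n, 1 ≤ n → ∀ x, 0 < φ n x)
    (hsub : ∀ m n, 1 ≤ m → 1 ≤ n → ∀ x, φ (m + n) x ≤ φ m x * φ n (T^[m] x)) :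
    UpperSemicontinuousOn (fun μ : ProbabilityMeasure X => lyapExp φ (μ : Measure X))
        {μ : ProbabilityMeasure X | (μ : Measure X).map T = (μ : Measure X)} ∧
      {μ : ProbabilityMeasure X | IsObservable Leb T μ}.Nonempty ∧
      IsCompact {μ : ProbabilityMeasure X | IsObservable Leb T μ} ∧
      {μ : ProbabilityMeasure X | IsObservable Leb T μ} ⊆
        {μ : ProbabilityMeasure X | (μ : Measure X).map T = (μ : Measure X)} ∧
      ∃ μ : ProbabilityMeasure X, IsObservable Leb T μ ∧
        lyapExp φ (μ : Measure X) =
          sSup {c : EReal | ∃ ν : ProbabilityMeasure X,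
            IsObservable Leb T ν ∧ c = lyapExp φ (ν : Measure X)} := by
  exact exists_lyapunov_maximizing_observable_general hT.continuous Leb ⟨hcont, hpos, hsub⟩
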